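/- Let X be a real Hilbert space, let J, J^δ : B_ρ(x*) → [0,∞) be Fréchet-differentiable with J(x*) = 0, ∇J Lipschitz with constant L < 1 on B_ρ(x*), and ‖∇J^δ(x) − ∇J(x)‖ ≤ δ for all x ∈ B_ρ(x*). Suppose J satisfies NC(0,β) for some β ∈ ℝ, and let x^δ_{k+1} = x^δ_k − ∇J^δ(x^δ_k) with x^δ_k ∈ B_ρ(x*). Then with e^δ_k = x^δ_k − x* and θ = 1 + 4β⁺: ‖e^δ_{k+1}‖² ≤ ‖e^δ_k‖² + θ‖∇J^δ(x^δ_k)‖² + 2δ‖e^δ_k‖ + 4β⁺δ². -/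

import Mathlib

open scoped RealInnerProductSpace
open Metric

/-!
Expanding `‖e - g‖²` with `e = x - x*` and noisy gradient `g`, the only term without a sign is
`-2 ⟪g, e⟫`. Replacing `g` by the exact gradient `p` costs `2δ‖e‖` by Cauchy–Schwarz, and NC(0,β)
tested against the minimizer `x*` bounds `-2 ⟪p, e⟫` by `2β⁺‖p‖²`. Finally
`‖p‖² ≤ (‖g‖ + δ)² ≤ 2(‖g‖² + δ²)` returns to the noisy gradient.
-/

theorem norm_sq_le_two_mul_of_norm_sub_le {E : Type*} [SeminormedAddGroup E] {u v : E} {δ : ℝ}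
    (h : ‖v - u‖ ≤ δ) : ‖u‖ ^ 2 ≤ 2 * (‖v‖ ^ 2 + δ ^ 2) :=
  calc ‖u‖ ^ 2 ≤ (‖v‖ + δ) ^ 2 := by
        gcongr
        exact (norm_le_norm_add_norm_sub v u).trans (by gcongr)
    _ ≤ 2 * (‖v‖ ^ 2 + δ ^ 2) := add_sq_le

section InnerProduct

variable {X : Type*} [SeminormedAddCommGroup X] [InnerProductSpace ℝ X]

theorem real_inner_sub_mul_norm_le_of_norm_sub_le {u v : X} {δ : ℝ} (h : ‖v - u‖ ≤ δ) (w : X) :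
    ⟪u, w⟫ - δ * ‖w‖ ≤ ⟪v, w⟫ := by
  have hdiff : ⟪u - v, w⟫ ≤ δ * ‖w‖ :=
    calc ⟪u - v, w⟫ ≤ ‖u - v‖ * ‖w‖ := real_inner_le_norm _ _
      _ ≤ δ * ‖w‖ := by
        rw [norm_sub_rev]
        gcongr
  rw [inner_sub_left] at hdiff
  linarith

theorem noisy_gradient_descent_recursive_estimate_general {xs x p g : X} {β δ : ℝ}
    (hp : -β * ‖p‖ ^ 2 ≤ ⟪p, x - xs⟫) (hg : ‖g - p‖ ≤ δ) :
    ‖x - g - xs‖ ^ 2 ≤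
      ‖x - xs‖ ^ 2 + (1 + 4 * max β 0) * ‖g‖ ^ 2 + 2 * δ * ‖x - xs‖ + 4 * max β 0 * δ ^ 2 := by
  have hinner : -⟪g, x - xs⟫ ≤ δ * ‖x - xs‖ + β * ‖p‖ ^ 2 := by
    linarith [real_inner_sub_mul_norm_le_of_norm_sub_le hg (x - xs)]
  have hexact : β * ‖p‖ ^ 2 ≤ max β 0 * (2 * (‖g‖ ^ 2 + δ ^ 2)) :=
    mul_le_mul (le_max_left β 0) (norm_sq_le_two_mul_of_norm_sub_le hg) (sq_nonneg _)
      (le_max_right β 0)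
  calc ‖x - g - xs‖ ^ 2 = ‖x - xs‖ ^ 2 + ‖g‖ ^ 2 + 2 * -⟪g, x - xs⟫ := by
        rw [sub_right_comm, norm_sub_sq_real, real_inner_comm]
        ring
    _ ≤ ‖x - xs‖ ^ 2 + ‖g‖ ^ 2
          + 2 * (δ * ‖x - xs‖ + max β 0 * (2 * (‖g‖ ^ 2 + δ ^ 2))) := by
        linarith
    _ = ‖x - xs‖ ^ 2 + (1 + 4 * max β 0) * ‖g‖ ^ 2 + 2 * δ * ‖x - xs‖
          + 4 * max β 0 * δ ^ 2 := by
        ring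

end InnerProduct

/-- (Recursive error estimate for the noisy iteration.) Under the
standing assumptions, `‖∇J^δ(x) - ∇J(x)‖ ≤ δ` on `B_ρ(x*)` and condition NC(0,β), if
`x^δ_k ∈ B_ρ(x*)`, then with `θ = 1 + 4β⁺`:
`‖e^δ_{k+1}‖² ≤ ‖e^δ_k‖² + θ‖∇J^δ(x^δ_k)‖² + 2δ‖e^δ_k‖ + 4β⁺δ²`. -/
theorem noisy_gradient_descent_recursive_estimate
    {X : Type*} [NormedAddCommGroup X] [InnerProductSpace ℝ X] [CompleteSpace X]
    (xs : X) (ρ : ℝ) (hρ : 0 < ρ)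
    (J : X → ℝ) (J' : X → X) (Jd : X → ℝ) (Jd' : X → X) (δ : ℝ)
    (hJnn : ∀ x ∈ closedBall xs ρ, 0 ≤ J x)
    (hJdnn : ∀ x ∈ closedBall xs ρ, 0 ≤ Jd x)
    (hJxs : J xs = 0)
    (hgrad : ∀ x ∈ closedBall xs ρ, HasGradientAt J (J' x) x)
    (hgradd : ∀ x ∈ closedBall xs ρ, HasGradientAt Jd (Jd' x) x)
    (L : ℝ) (hL0 : 0 ≤ L) (hL1 : L < 1)
    (hLip : ∀ x₁ ∈ closedBall xs ρ, ∀ x₂ ∈ closedBall xs ρ,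
      ‖J' x₁ - J' x₂‖ ≤ L * ‖x₁ - x₂‖)
    (happrox : ∀ x ∈ closedBall xs ρ, ‖Jd' x - J' x‖ ≤ δ)
    (β : ℝ)
    (hNC : ∀ x₁ ∈ closedBall xs ρ, ∀ x₂ ∈ closedBall xs ρ,
      J x₁ ≤ 0 * J x₂ → ⟪J' x₂, x₂ - x₁⟫ ≥ -β * ‖J' x₂‖ ^ 2)
    (xd : ℕ → X) (hxd : ∀ k, xd (k + 1) = xd k - Jd' (xd k))
    (k : ℕ) (hk : xd k ∈ closedBall xs ρ) :
    ‖xd (k + 1) - xs‖ ^ 2 ≤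
      ‖xd k - xs‖ ^ 2 + (1 + 4 * max β 0) * ‖Jd' (xd k)‖ ^ 2 +
        2 * δ * ‖xd k - xs‖ + 4 * max β 0 * δ ^ 2 := by
  rw [hxd]
  exact noisy_gradient_descent_recursive_estimate_general
    (hNC xs (mem_closedBall_self hρ.le) (xd k) hk (by simp [hJxs])) (happrox (xd k) hk)
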